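/- arXiv:0910.0521 — 2 statements merged into one kernel-verified Lean document; each statement's English description precedes it below -/
import Mathlib

section
/- Let d ≥ 1, let Ω' ⊆ ℝ^d, and let z > 0. Let 𝒯 : ℝ^d → ℝ be a function of class C³ such that 0 ≤ 𝒯(x) ≤ 𝒯_max for all x in the closed z-neighborhood of Ω', and such that all third-order directional derivatives of 𝒯 are bounded in absolute value by M₃ there. Set v(x) := 1 − e^{−𝒯(x)} and v_max := 1 − e^{−𝒯_max}. Let ṽ : ℝ^d → ℝ satisfy |ṽ(x) − v(x)| ≤ C h^α for all x in the closed z-neighborhood of Ω', where C, α, h > 0 and v_max + C h^α < 1, and set 𝒯̃(x) := −ln(1 − ṽ(x)). Then for every x ∈ Ω' and every i ∈ {1,…,d}, |(𝒯̃(x + z e_i) − 𝒯̃(x − z e_i))/(2z) − ∂𝒯/∂x_i(x)| ≤ (C h^α)/((1 − v_max − C h^α) z) + (M₃/6) z². In particular the maximum over i of this error is O(h^α/z) + O(z²) as h, z → 0. -/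
open Filter Metric

/-!
The error of the centered difference of `𝒯̃` is the consistency error of the centered difference of
`𝒯` plus the perturbation error caused by replacing `𝒯` with `𝒯̃`.

For the consistency error, let `f` be the restriction of `𝒯` to a line through `x`. The odd function
`t ↦ f (a + t) - f (a - t) - 2 t f' a` vanishes at `0` together with its first two derivatives, and
its third derivative is at most `2 M₃`; integrating three times bounds it by `M₃ / 3 * t ^ 3`.

For the perturbation error, all values of `v` and `ṽ` stay below `v_max + C h ^ α < 1`, where the
inverse Kruzkov transform is Lipschitz with constant `1 / (1 - v_max - C h ^ α)`.
-/

section TaylorEstimates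

variable {F : Type*} [NormedAddCommGroup F] [NormedSpace ℝ F]

lemma norm_le_mul_pow_succ_of_norm_hasDerivAt_le {φ φ' : ℝ → F} {c z : ℝ} {n : ℕ}
    (hφ : ∀ t ∈ Set.Icc 0 z, HasDerivAt φ (φ' t) t) (hφ0 : φ 0 = 0)
    (hφ' : ∀ t ∈ Set.Icc 0 z, ‖φ' t‖ ≤ c * t ^ n) :
    ∀ t ∈ Set.Icc 0 z, ‖φ t‖ ≤ c / (n + 1) * t ^ (n + 1) := by
  have hB (t : ℝ) : HasDerivAt (fun s ↦ c / (n + 1) * s ^ (n + 1)) (c * t ^ n) t := by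
    refine ((hasDerivAt_pow (n + 1) t).const_mul (c / (n + 1))).congr_deriv ?_
    push_cast
    field_simp
  exact image_norm_le_of_norm_deriv_right_le_deriv_boundary
    (fun t ht ↦ (hφ t ht).continuousAt.continuousWithinAt)
    (fun t ht ↦ (hφ t (Set.Ico_subset_Icc_self ht)).hasDerivWithinAt)
    (by simp [hφ0]) hB (fun t ht ↦ hφ' t (Set.Ico_subset_Icc_self ht))

lemma norm_sub_sub_two_mul_smul_deriv_le {f f' f'' f''' : ℝ → F} {a z M : ℝ} (hz : 0 ≤ z)
    (hf : ∀ t ∈ Set.Icc (a - z) (a + z), HasDerivAt f (f' t) t)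
    (hf' : ∀ t ∈ Set.Icc (a - z) (a + z), HasDerivAt f' (f'' t) t)
    (hf'' : ∀ t ∈ Set.Icc (a - z) (a + z), HasDerivAt f'' (f''' t) t)
    (hM : ∀ t ∈ Set.Icc (a - z) (a + z), ‖f''' t‖ ≤ M) :
    ‖f (a + z) - f (a - z) - (2 * z) • f' a‖ ≤ M / 3 * z ^ 3 := by
  have hadd {t : ℝ} (ht : t ∈ Set.Icc 0 z) : a + t ∈ Set.Icc (a - z) (a + z) := by
    constructor <;> linarith [ht.1, ht.2]
  have hsub {t : ℝ} (ht : t ∈ Set.Icc 0 z) : a - t ∈ Set.Icc (a - z) (a + z) := by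
    constructor <;> linarith [ht.1, ht.2]
  have hodd {g g' : ℝ → F} (hg : ∀ t ∈ Set.Icc (a - z) (a + z), HasDerivAt g (g' t) t) :
      ∀ t ∈ Set.Icc 0 z, HasDerivAt (fun s ↦ g (a + s) - g (a - s)) (g' (a + t) + g' (a - t)) t :=
    fun t ht ↦ by
      simpa using ((hg _ (hadd ht)).comp_const_add a t).fun_sub
        ((hg _ (hsub ht)).comp_const_sub a t)
  have heven {g g' : ℝ → F} (hg : ∀ t ∈ Set.Icc (a - z) (a + z), HasDerivAt g (g' t) t) :
      ∀ t ∈ Set.Icc 0 z, HasDerivAt (fun s ↦ g (a + s) + g (a - s)) (g' (a + t) - g' (a - t)) t :=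
    fun t ht ↦ by
      simpa [← sub_eq_add_neg] using ((hg _ (hadd ht)).comp_const_add a t).fun_add
        ((hg _ (hsub ht)).comp_const_sub a t)
  have hthird : ∀ t ∈ Set.Icc 0 z, ‖f''' (a + t) + f''' (a - t)‖ ≤ 2 * M * t ^ 0 := fun t ht ↦
    (norm_add_le_of_le (hM _ (hadd ht)) (hM _ (hsub ht))).trans_eq (by ring)
  have hsecond : ∀ t ∈ Set.Icc 0 z, ‖f'' (a + t) - f'' (a - t)‖ ≤ 2 * M * t ^ 1 := fun t ht ↦
    (norm_le_mul_pow_succ_of_norm_hasDerivAt_le (hodd hf'') (by simp) hthird t ht).trans_eq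
      (by norm_num)
  have hfirst : ∀ t ∈ Set.Icc 0 z,
      ‖f' (a + t) + f' (a - t) - (2 : ℝ) • f' a‖ ≤ M * t ^ 2 := fun t ht ↦
    (norm_le_mul_pow_succ_of_norm_hasDerivAt_le (fun s hs ↦ (heven hf' s hs).sub_const _)
      (by simp [two_smul]) hsecond t ht).trans_eq (by norm_num)
  rw [mul_comm 2 z]
  exact (norm_le_mul_pow_succ_of_norm_hasDerivAt_le (φ := fun t ↦ _ - (t * 2) • f' a)
    (fun s hs ↦ (hodd hf s hs).fun_sub ((hasDerivAt_mul_const (2 : ℝ)).smul_const (f' a)))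
    (by simp) hfirst z ⟨hz, le_rfl⟩).trans_eq (by norm_num)

end TaylorEstimates

lemma hasDerivAt_iteratedFDeriv_comp_line {𝕜 E F : Type*} [NontriviallyNormedField 𝕜]
    [NormedAddCommGroup E] [NormedSpace 𝕜 E] [NormedAddCommGroup F] [NormedSpace 𝕜 F]
    {f : E → F} {x u : E} {t : 𝕜} {n : ℕ} {N : WithTop ℕ∞}
    (hf : ContDiffAt 𝕜 N f (x + t • u)) (hn : n < N) :
    HasDerivAt (fun s : 𝕜 ↦ iteratedFDeriv 𝕜 n f (x + s • u) fun _ ↦ u)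
      (iteratedFDeriv 𝕜 (n + 1) f (x + t • u) fun _ ↦ u) t := by
  have hline : HasDerivAt (fun s : 𝕜 ↦ x + s • u) u t := by
    simpa using ((hasDerivAt_id t).smul_const u).const_add x
  have hderiv : HasDerivAt (fun s : 𝕜 ↦ iteratedFDeriv 𝕜 n f (x + s • u))
      (fderiv 𝕜 (iteratedFDeriv 𝕜 n f) (x + t • u) u) t :=
    (hf.differentiableAt_iteratedFDeriv hn).hasFDerivAt.comp_hasDerivAt t hline
  rw [iteratedFDeriv_succ_apply_left]
  exact (ContinuousMultilinearMap.apply 𝕜 (fun _ : Fin n ↦ E) F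
    fun _ ↦ u).hasFDerivAt.comp_hasDerivAt t hderiv

/-- The centered finite difference of `f` at `x` in the direction `u` with step `z`, approximating
the derivative of `f` at `x` along `u`. The `D̃ᵢ f x` of the paper is the case `u = eᵢ`. -/
noncomputable def centeredDiff {E F : Type*} [AddCommGroup E] [Module ℝ E] [AddCommGroup F]
    [Module ℝ F] (f : E → F) (z : ℝ) (x u : E) : F :=
  (2 * z)⁻¹ • (f (x + z • u) - f (x - z • u))

lemma norm_centeredDiff_sub_centeredDiff_le {E F : Type*} [AddCommGroup E] [Module ℝ E]
    [NormedAddCommGroup F] [NormedSpace ℝ F] {f g : E → F} {x u : E} {z η : ℝ} (hz : 0 < z)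
    (hadd : ‖f (x + z • u) - g (x + z • u)‖ ≤ η) (hsub : ‖f (x - z • u) - g (x - z • u)‖ ≤ η) :
    ‖centeredDiff f z x u - centeredDiff g z x u‖ ≤ η / z := by
  calc ‖centeredDiff f z x u - centeredDiff g z x u‖
      = (2 * z)⁻¹ *
          ‖f (x + z • u) - g (x + z • u) - (f (x - z • u) - g (x - z • u))‖ := by
        rw [centeredDiff, centeredDiff, ← smul_sub, norm_smul,
          Real.norm_of_nonneg (by positivity), sub_sub_sub_comm]
    _ ≤ (2 * z)⁻¹ * (η + η) := by gcongr; exact norm_sub_le_of_le hadd hsub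
    _ = η / z := by field_simp; ring

lemma norm_centeredDiff_sub_fderiv_le {E F : Type*} [NormedAddCommGroup E] [NormedSpace ℝ E]
    [NormedAddCommGroup F] [NormedSpace ℝ F] {f : E → F} {x u : E} {z M : ℝ} (hz : 0 < z)
    (hf : ∀ t ∈ Set.Icc (-z) z, ContDiffAt ℝ 3 f (x + t • u))
    (hM : ∀ t ∈ Set.Icc (-z) z, ‖iteratedFDeriv ℝ 3 f (x + t • u) fun _ ↦ u‖ ≤ M) :
    ‖centeredDiff f z x u - fderiv ℝ f x u‖ ≤ M / 6 * z ^ 2 := by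
  have hsymm : ‖f (x + z • u) - f (x - z • u) - (2 * z) • fderiv ℝ f x u‖ ≤ M / 3 * z ^ 3 := by
    have hderiv (n : ℕ) (hn : n < (3 : WithTop ℕ∞)) : ∀ t ∈ Set.Icc (0 - z) (0 + z),
        HasDerivAt (fun s : ℝ ↦ iteratedFDeriv ℝ n f (x + s • u) fun _ ↦ u)
          (iteratedFDeriv ℝ (n + 1) f (x + t • u) fun _ ↦ u) t := fun t ht ↦
      hasDerivAt_iteratedFDeriv_comp_line (hf t (by simpa using ht)) hn
    simpa [iteratedFDeriv_one_apply, sub_eq_add_neg] using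
      norm_sub_sub_two_mul_smul_deriv_le hz.le (hderiv 0 (by norm_num)) (hderiv 1 (by norm_num))
        (hderiv 2 (by norm_num)) (by simpa using hM)
  have herror : centeredDiff f z x u - fderiv ℝ f x u =
      (2 * z)⁻¹ • (f (x + z • u) - f (x - z • u) - (2 * z) • fderiv ℝ f x u) := by
    rw [centeredDiff, smul_sub _ _ ((2 * z) • _), inv_smul_smul₀ (by positivity)]
  calc ‖centeredDiff f z x u - fderiv ℝ f x u‖
      = (2 * z)⁻¹ * ‖f (x + z • u) - f (x - z • u) - (2 * z) • fderiv ℝ f x u‖ := by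
        rw [herror, norm_smul, Real.norm_of_nonneg (by positivity)]
    _ ≤ (2 * z)⁻¹ * (M / 3 * z ^ 3) := by gcongr
    _ = M / 6 * z ^ 2 := by field_simp; ring

lemma abs_log_sub_log_le {a b δ : ℝ} (hδ : 0 < δ) (ha : δ ≤ a) (hb : δ ≤ b) :
    |Real.log a - Real.log b| ≤ |a - b| / δ := by
  have hderiv_le : ∀ x ∈ Set.Ici δ, ‖x⁻¹‖ ≤ δ⁻¹ := fun x hx ↦ by
    have hδx : δ ≤ x := hx
    rw [norm_inv, Real.norm_of_nonneg (hδ.le.trans hδx)]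
    gcongr
  rw [div_eq_inv_mul]
  exact (convex_Ici δ).norm_image_sub_le_of_norm_hasDerivWithin_le
    (fun x hx ↦ (Real.hasDerivAt_log (hδ.trans_le hx).ne').hasDerivWithinAt) hderiv_le hb ha

/-- The Kruzkov transform, rescaling `[0, ∞)` to `[0, 1)` so that an unbounded value function
becomes a bounded one. -/
noncomputable def kruzkov (τ : ℝ) : ℝ := 1 - Real.exp (-τ)

/-- The inverse Kruzkov transform, recovering a value function from its transform. It is meaningful
for `w < 1` only; elsewhere it takes the junk values of `Real.log` at nonpositive arguments. -/
noncomputable def kruzkovInv (w : ℝ) : ℝ := -Real.log (1 - w)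

lemma kruzkovInv_kruzkov (τ : ℝ) : kruzkovInv (kruzkov τ) = τ := by
  simp [kruzkovInv, kruzkov]

lemma monotone_kruzkov : Monotone kruzkov := fun σ τ h ↦ by
  unfold kruzkov
  gcongr

lemma abs_kruzkovInv_sub_kruzkovInv_le {v w c : ℝ} (hc : c < 1) (hv : v ≤ c) (hw : w ≤ c) :
    |kruzkovInv v - kruzkovInv w| ≤ |v - w| / (1 - c) := by
  rw [kruzkovInv, kruzkovInv, neg_sub_neg]
  have hlog : |Real.log (1 - w) - Real.log (1 - v)| ≤ |1 - w - (1 - v)| / (1 - c) :=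
    abs_log_sub_log_le (sub_pos.2 hc) (by gcongr) (by gcongr)
  rwa [sub_sub_sub_cancel_left] at hlog

lemma abs_kruzkovInv_sub_le {τ τmax w ε : ℝ} (hτ : τ ≤ τmax) (hw : |w - kruzkov τ| ≤ ε)
    (hsmall : kruzkov τmax + ε < 1) :
    |kruzkovInv w - τ| ≤ ε / (1 - kruzkov τmax - ε) := by
  have hmono : kruzkov τ ≤ kruzkov τmax := monotone_kruzkov hτ
  have hε : 0 ≤ ε := (abs_nonneg _).trans hw
  calc |kruzkovInv w - τ| = |kruzkovInv w - kruzkovInv (kruzkov τ)| := by rw [kruzkovInv_kruzkov]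
    _ ≤ |w - kruzkov τ| / (1 - (kruzkov τmax + ε)) :=
        abs_kruzkovInv_sub_kruzkovInv_le hsmall (by linarith [le_of_abs_le hw]) (by linarith)
    _ ≤ ε / (1 - (kruzkov τmax + ε)) :=
        div_le_div_of_nonneg_right hw (sub_pos.2 hsmall).le
    _ = ε / (1 - kruzkov τmax - ε) := by rw [sub_sub]

theorem hjb_pmp_gradient_convergence_general {E : Type*} [NormedAddCommGroup E] [NormedSpace ℝ E]
    {Ω' : Set E} {z : ℝ} (hz : 0 < z) {T vtilde : E → ℝ} {Tmax M₃ ε : ℝ} {x u : E}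
    (hx : x ∈ Ω') (hu : ‖u‖ = 1)
    (hT : ∀ y ∈ cthickening z Ω', ContDiffAt ℝ 3 T y)
    (hTmax : ∀ y ∈ cthickening z Ω', T y ≤ Tmax)
    (hM₃ : ∀ y ∈ cthickening z Ω', |iteratedFDeriv ℝ 3 T y fun _ ↦ u| ≤ M₃)
    (hv : ∀ y ∈ cthickening z Ω', |vtilde y - kruzkov (T y)| ≤ ε)
    (hsmall : kruzkov Tmax + ε < 1) :
    |centeredDiff (fun y ↦ kruzkovInv (vtilde y)) z x u - fderiv ℝ T x u| ≤
      ε / ((1 - kruzkov Tmax - ε) * z) + M₃ / 6 * z ^ 2 := by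
  have hmem : ∀ t ∈ Set.Icc (-z) z, x + t • u ∈ cthickening z Ω' := fun t ht ↦
    mem_cthickening_of_dist_le _ x z Ω' hx (by simpa [norm_smul, hu] using abs_le.2 ht)
  have hclose (y : E) (hy : y ∈ cthickening z Ω') :
      ‖kruzkovInv (vtilde y) - T y‖ ≤ ε / (1 - kruzkov Tmax - ε) :=
    abs_kruzkovInv_sub_le (hTmax y hy) (hv y hy) hsmall
  have hperturbation : |centeredDiff (fun y ↦ kruzkovInv (vtilde y)) z x u - centeredDiff T z x u| ≤
      ε / ((1 - kruzkov Tmax - ε) * z) := by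
    have hmem_add : x + z • u ∈ cthickening z Ω' := hmem z (by simp [hz.le])
    have hmem_sub : x - z • u ∈ cthickening z Ω' := by
      simpa [sub_eq_add_neg] using hmem (-z) (by simp [hz.le])
    rw [← div_div]
    exact norm_centeredDiff_sub_centeredDiff_le (f := fun y ↦ kruzkovInv (vtilde y)) hz
      (hclose _ hmem_add) (hclose _ hmem_sub)
  have hconsistency : |centeredDiff T z x u - fderiv ℝ T x u| ≤ M₃ / 6 * z ^ 2 :=
    norm_centeredDiff_sub_fderiv_le hz (fun t ht ↦ hT _ (hmem t ht)) fun t ht ↦ hM₃ _ (hmem t ht)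
  exact (abs_sub_le _ _ _).trans (add_le_add hperturbation hconsistency)

/-- **Theorem 1 of the paper** (with explicit constants).
Convergence of the centered finite-difference gradient of the approximate value
function `𝒯̃ = -log (1 - ṽ)` to the gradient of the true value function `𝒯`,
where `v = 1 - exp (-𝒯)` is the Kruzkov transform and `ṽ` approximates `v`
with error `C * h ^ α` on the closed `z`-neighborhood of `Ω'`. -/
theorem hjb_pmp_gradient_convergence
    (d : ℕ) (hd : 1 ≤ d) (Ω' : Set (EuclideanSpace ℝ (Fin d)))
    (z : ℝ) (hz : 0 < z)
    (T : EuclideanSpace ℝ (Fin d) → ℝ) (Tmax M₃ : ℝ)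
    (hT : ContDiff ℝ 3 T)
    (hT0 : ∀ x ∈ Metric.cthickening z Ω', 0 ≤ T x)
    (hTmax : ∀ x ∈ Metric.cthickening z Ω', T x ≤ Tmax)
    (hM₃ : ∀ x ∈ Metric.cthickening z Ω', ∀ u : EuclideanSpace ℝ (Fin d), ‖u‖ = 1 →
      |iteratedFDeriv ℝ 3 T x (fun _ => u)| ≤ M₃)
    (vtilde : EuclideanSpace ℝ (Fin d) → ℝ)
    (C α h : ℝ) (hC : 0 < C) (hα : 0 < α) (hh : 0 < h)
    (hv : ∀ x ∈ Metric.cthickening z Ω',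
      |vtilde x - (1 - Real.exp (-T x))| ≤ C * h ^ α)
    (hsmall : (1 - Real.exp (-Tmax)) + C * h ^ α < 1) :
    ∀ x ∈ Ω', ∀ i : Fin d,
      |((-Real.log (1 - vtilde (x + z • EuclideanSpace.single i 1))) -
          (-Real.log (1 - vtilde (x - z • EuclideanSpace.single i 1)))) / (2 * z) -
        fderiv ℝ T x (EuclideanSpace.single i 1)| ≤
      C * h ^ α / ((1 - (1 - Real.exp (-Tmax)) - C * h ^ α) * z) + M₃ / 6 * z ^ 2 := by
  intro x hx i
  have hi : ‖EuclideanSpace.single i (1 : ℝ)‖ = 1 := by simp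
  simpa only [centeredDiff, kruzkov, kruzkovInv, smul_eq_mul, ← div_eq_inv_mul] using
    hjb_pmp_gradient_convergence_general hz hx hi (fun y _ ↦ hT.contDiffAt) hTmax
      (fun y hy ↦ hM₃ y hy _ hi) hv hsmall
end

section
/- Let 𝒯 : ℝ^d → ℝ be of class C¹ on a neighborhood of a point x with ∇𝒯(x) ≠ 0. For each δ > 0 small enough that the closed ball B(x, δ) is contained in this neighborhood, choose any minimizer ζ*_δ of ζ ↦ 𝒯(x + δ ζ) over the closed unit ball B(0,1) of ℝ^d, and set ξ*_δ := ((𝒯(x + δ ζ*_δ) − 𝒯(x))/δ) ζ*_δ. Then ζ*_δ → −∇𝒯(x)/‖∇𝒯(x)‖ and ξ*_δ → ∇𝒯(x) as δ → 0⁺. -/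
open Filter Metric

/-!
By differentiability, the difference quotient of `f` at `x` along bounded directions `ζ` differs
from `f' ζ` by a quantity tending to zero with the step `δ`. Comparing a minimizer `ζ` with fixed
directions of the unit ball forces the quotient, hence also `f' ζ`, towards the infimum `-‖f'‖` of
`f'` on that ball. In a Hilbert space this infimum is attained only at the normalized opposite of
the gradient, and stably so: equality in Cauchy-Schwarz is approached only near the equality case.
-/

open Asymptotics
open scoped Topology InnerProductSpace

section DifferenceQuotient

variable {𝕜 E F ι : Type*} [NontriviallyNormedField 𝕜] [NormedAddCommGroup E] [NormedSpace 𝕜 E]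
  [NormedAddCommGroup F] [NormedSpace 𝕜 F]

theorem tendsto_inv_smul_sub_sub_apply_of_hasFDerivAt {f : E → F} {f' : E →L[𝕜] F} {x : E}
    {l : Filter ι} {c : ι → 𝕜} {z : ι → E} (hf : HasFDerivAt f f' x)
    (hc : Tendsto c l (𝓝[≠] 0)) (hz : z =O[l] fun _ ↦ (1 : 𝕜)) :
    Tendsto (fun i ↦ (c i)⁻¹ • (f (x + c i • z i) - f x) - f' (z i)) l (𝓝 0) := by
  obtain ⟨hc_zero, hc_ne⟩ := tendsto_nhdsWithin_iff.mp hc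
  have hcz : (fun i ↦ c i • z i) =O[l] c := by
    simpa only [smul_eq_mul, mul_one] using (isBigO_refl c l).smul hz
  have hremainder : (fun i ↦ f (x + c i • z i) - f x - f' (c i • z i)) =o[l] c :=
    ((hasFDerivAt_iff_isLittleO_nhds_zero.mp hf).comp_tendsto
      (hcz.trans_tendsto hc_zero)).trans_isBigO hcz
  refine hremainder.tendsto_inv_smul_nhds_zero.congr' ?_
  filter_upwards [hc_ne] with i hi
  rw [smul_sub, map_smul, inv_smul_smul₀ hi]

end DifferenceQuotient

section Minimizers

variable {E ι : Type*} [NormedAddCommGroup E] [NormedSpace ℝ E]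

theorem exists_norm_lt_one_apply_lt_of_neg_opNorm_lt (φ : E →L[ℝ] ℝ) {a : ℝ} (ha : -‖φ‖ < a) :
    ∃ w : E, ‖w‖ < 1 ∧ φ w < a := by
  obtain ⟨w, hw, haw⟩ := φ.exists_lt_apply_of_lt_opNorm (neg_lt.mp ha)
  rcases lt_abs.mp haw with hpos | hneg
  · exact ⟨-w, by rwa [norm_neg], by rw [map_neg]; exact neg_lt.mp hpos⟩
  · exact ⟨w, hw, neg_lt_neg_iff.mp hneg⟩

variable {f : E → ℝ} {f' : E →L[ℝ] ℝ} {x : E} {l : Filter ι} {δ : ι → ℝ} {ζ : ι → E}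

theorem tendsto_div_sub_apply_of_hasFDerivAt (hf : HasFDerivAt f f' x)
    (hδ : Tendsto δ l (𝓝[>] 0)) (hζ : ∀ᶠ i in l, ζ i ∈ closedBall 0 1) :
    Tendsto (fun i ↦ (f (x + δ i • ζ i) - f x) / δ i - f' (ζ i)) l (𝓝 0) := by
  have hζ_bounded : ζ =O[l] fun _ ↦ (1 : ℝ) :=
    .of_bound 1 <| by simpa only [norm_one, mul_one, mem_closedBall_zero_iff] using hζ
  simpa only [smul_eq_mul, ← div_eq_inv_mul] using
    tendsto_inv_smul_sub_sub_apply_of_hasFDerivAt hf (hδ.mono_right (nhdsGT_le_nhdsNE 0)) hζ_bounded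

theorem tendsto_div_neg_opNorm_of_isMinOn (hf : HasFDerivAt f f' x)
    (hδ : Tendsto δ l (𝓝[>] 0)) (hζ : ∀ᶠ i in l, ζ i ∈ closedBall 0 1)
    (hmin : ∀ᶠ i in l, IsMinOn (fun w ↦ f (x + δ i • w)) (closedBall 0 1) (ζ i)) :
    Tendsto (fun i ↦ (f (x + δ i • ζ i) - f x) / δ i) l (𝓝 (-‖f'‖)) := by
  refine tendsto_order.mpr ⟨fun a ha ↦ ?_, fun a ha ↦ ?_⟩
  · have herror := (tendsto_div_sub_apply_of_hasFDerivAt hf hδ hζ).eventually_const_lt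
      (show a + ‖f'‖ < 0 by linarith)
    filter_upwards [herror, hζ] with i hi hζi
    have hlower : -‖f'‖ ≤ f' (ζ i) :=
      (abs_le.mp (f'.unit_le_opNorm _ (mem_closedBall_zero_iff.mp hζi))).1
    linarith
  · obtain ⟨w, hw, hwa⟩ := exists_norm_lt_one_apply_lt_of_neg_opNorm_lt f' ha
    have hw_mem : w ∈ closedBall 0 1 := mem_closedBall_zero_iff.mpr hw.le
    have herror := (tendsto_div_sub_apply_of_hasFDerivAt hf hδ
      (.of_forall fun _ ↦ hw_mem)).eventually_lt_const (sub_pos.mpr hwa)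
    filter_upwards [herror, hmin, (tendsto_nhdsWithin_iff.mp hδ).2] with i hi hmin_i hδi
    calc (f (x + δ i • ζ i) - f x) / δ i
        ≤ (f (x + δ i • w) - f x) / δ i :=
          div_le_div_of_nonneg_right (sub_le_sub_right (hmin_i hw_mem) _) (Set.mem_Ioi.mp hδi).le
      _ < a := by linarith

theorem tendsto_apply_neg_opNorm_of_isMinOn (hf : HasFDerivAt f f' x)
    (hδ : Tendsto δ l (𝓝[>] 0)) (hζ : ∀ᶠ i in l, ζ i ∈ closedBall 0 1)
    (hmin : ∀ᶠ i in l, IsMinOn (fun w ↦ f (x + δ i • w)) (closedBall 0 1) (ζ i)) :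
    Tendsto (fun i ↦ f' (ζ i)) l (𝓝 (-‖f'‖)) := by
  simpa only [sub_sub_cancel, sub_zero] using
    (tendsto_div_neg_opNorm_of_isMinOn hf hδ hζ hmin).sub
      (tendsto_div_sub_apply_of_hasFDerivAt hf hδ hζ)

end Minimizers

section InnerProduct

theorem tendsto_of_norm_le_of_tendsto_re_inner {𝕜 E ι : Type*} [RCLike 𝕜]
    [SeminormedAddCommGroup E] [InnerProductSpace 𝕜 E] {l : Filter ι} {z : ι → E} {v : E}
    (hnorm : ∀ᶠ i in l, ‖z i‖ ≤ ‖v‖)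
    (hinner : Tendsto (fun i ↦ RCLike.re (inner 𝕜 v (z i))) l (𝓝 (‖v‖ ^ 2))) :
    Tendsto z l (𝓝 v) := by
  have hbound : Tendsto (fun i ↦ 2 * (‖v‖ ^ 2 - RCLike.re (inner 𝕜 v (z i)))) l (𝓝 0) := by
    have hlimit := (hinner.const_sub (‖v‖ ^ 2)).const_mul 2
    rwa [sub_self, mul_zero] at hlimit
  have hsq : Tendsto (fun i ↦ ‖v - z i‖ ^ 2) l (𝓝 0) := by
    refine squeeze_zero' (.of_forall fun _ ↦ sq_nonneg _) ?_ hbound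
    filter_upwards [hnorm] with i hi
    have hnorm_sq : ‖z i‖ ^ 2 ≤ ‖v‖ ^ 2 := by gcongr
    rw [norm_sub_sq (𝕜 := 𝕜)]
    linarith
  rw [tendsto_iff_norm_sub_tendsto_zero]
  simpa only [Real.sqrt_sq (norm_nonneg _), Real.sqrt_zero, norm_sub_rev v] using hsq.sqrt

variable {E : Type*} [NormedAddCommGroup E] [InnerProductSpace ℝ E]

theorem tendsto_neg_inv_norm_smul_of_tendsto_inner {ι : Type*} {l : Filter ι} {ζ : ι → E} {g : E}
    (hg : g ≠ 0) (hζ : ∀ᶠ i in l, ζ i ∈ closedBall 0 1)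
    (hinner : Tendsto (fun i ↦ ⟪g, ζ i⟫_ℝ) l (𝓝 (-‖g‖))) :
    Tendsto ζ l (𝓝 (-(‖g‖⁻¹ • g))) := by
  have hg_norm : ‖g‖ ≠ 0 := norm_ne_zero_iff.mpr hg
  have hunit : ‖-(‖g‖⁻¹ • g)‖ = 1 := by
    rw [norm_neg, norm_smul, norm_inv, norm_norm, inv_mul_cancel₀ hg_norm]
  refine tendsto_of_norm_le_of_tendsto_re_inner (𝕜 := ℝ) ?_ ?_
  · simpa only [hunit, mem_closedBall_zero_iff] using hζ
  · simpa only [hunit, RCLike.re_to_real, inner_neg_left, real_inner_smul_left, mul_neg, neg_neg,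
      inv_mul_cancel₀ hg_norm, one_pow] using (hinner.const_mul ‖g‖⁻¹).neg

theorem maximal_decrease_direction_tendsto_gradient_general [CompleteSpace E] {ι : Type*}
    {T : E → ℝ} {g x : E} {l : Filter ι} {δ : ι → ℝ} {ζ : ι → E} (hT : HasGradientAt T g x)
    (hg : g ≠ 0) (hδ : Tendsto δ l (𝓝[>] 0)) (hζ : ∀ᶠ i in l, ζ i ∈ closedBall 0 1)
    (hmin : ∀ᶠ i in l, IsMinOn (fun w ↦ T (x + δ i • w)) (closedBall 0 1) (ζ i)) :
    Tendsto ζ l (𝓝 (-(‖g‖⁻¹ • g))) ∧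
      Tendsto (fun i ↦ ((T (x + δ i • ζ i) - T x) / δ i) • ζ i) l (𝓝 g) := by
  have hinner := tendsto_apply_neg_opNorm_of_isMinOn hT.hasFDerivAt hδ hζ hmin
  have hquotient := tendsto_div_neg_opNorm_of_isMinOn hT.hasFDerivAt hδ hζ hmin
  simp only [InnerProductSpace.toDual_apply_apply, LinearIsometryEquiv.norm_map] at hinner hquotient
  have hdirection := tendsto_neg_inv_norm_smul_of_tendsto_inner hg hζ hinner
  refine ⟨hdirection, ?_⟩
  simpa only [smul_neg, neg_smul, neg_neg, smul_inv_smul₀ (norm_ne_zero_iff.mpr hg)] using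
    hquotient.smul hdirection

end InnerProduct

/-- If `𝒯` is `C¹` on a neighborhood `U` of `x` with `∇𝒯(x) ≠ 0`, and for each
`δ > 0` small enough (so that `closedBall x δ ⊆ U`) the vector `ζ δ` is a
minimizer of `ζ ↦ 𝒯(x + δζ)` over the closed unit ball, then, as `δ → 0⁺`,
`ζ δ → -∇𝒯(x)/‖∇𝒯(x)‖` and
`ξ δ := ((𝒯(x + δ • ζ δ) - 𝒯 x)/δ) • ζ δ → ∇𝒯(x)`. -/
theorem maximal_decrease_direction_tendsto_gradient
    (d : ℕ) (T : EuclideanSpace ℝ (Fin d) → ℝ) (x : EuclideanSpace ℝ (Fin d))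
    (U : Set (EuclideanSpace ℝ (Fin d))) (hU : U ∈ nhds x)
    (hT : ContDiffOn ℝ 1 T U) (hgrad : gradient T x ≠ 0)
    (ζ : ℝ → EuclideanSpace ℝ (Fin d))
    (hζmem : ∀ δ : ℝ, 0 < δ → Metric.closedBall x δ ⊆ U →
      ζ δ ∈ Metric.closedBall (0 : EuclideanSpace ℝ (Fin d)) 1)
    (hζmin : ∀ δ : ℝ, 0 < δ → Metric.closedBall x δ ⊆ U →
      ∀ w ∈ Metric.closedBall (0 : EuclideanSpace ℝ (Fin d)) 1,
        T (x + δ • ζ δ) ≤ T (x + δ • w)) :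
    Filter.Tendsto ζ (nhdsWithin 0 (Set.Ioi 0))
      (nhds (-(‖gradient T x‖⁻¹ • gradient T x))) ∧
    Filter.Tendsto (fun δ : ℝ => ((T (x + δ • ζ δ) - T x) / δ) • ζ δ)
      (nhdsWithin 0 (Set.Ioi 0)) (nhds (gradient T x)) := by
  have hgradient : HasGradientAt T (gradient T x) x :=
    ((hT.contDiffAt hU).differentiableAt one_ne_zero).hasGradientAt
  have hball : ∀ᶠ δ : ℝ in 𝓝[>] 0, 0 < δ ∧ closedBall x δ ⊆ U :=
    eventually_mem_nhdsWithin.and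
      (eventually_nhdsWithin_of_eventually_nhds (eventually_closedBall_subset hU))
  exact maximal_decrease_direction_tendsto_gradient_general hgradient hgrad tendsto_id
    (hball.mono fun δ h ↦ hζmem δ h.1 h.2) (hball.mono fun δ h ↦ hζmin δ h.1 h.2)
end
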